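/- Let g be holomorphic on the unit disc D. Then: (i) the operator I_g maps the Besov space B^1 into the Bloch space 𝓑 if and only if g ∈ H^∞; (ii) the multiplication operator M_g maps B^1 into 𝓑 if and only if g ∈ H^∞. -/

import Mathlib

open MeasureTheory Metric Complex Real Filter Set

noncomputable section

/-- `f` is holomorphic on the open unit disc. -/
def HolOn (f : ℂ → ℂ) : Prop := DifferentiableOn ℂ f (Metric.ball (0:ℂ) 1)

/-- The normalized Lebesgue area measure on `ℂ` (so the unit disc has total mass 1). -/
def dA : Measure ℂ := (ENNReal.ofReal π)⁻¹ • volume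

/-- Bounded holomorphic functions on the unit disc. -/
def Hinf : Set (ℂ → ℂ) :=
  {f | HolOn f ∧ ∃ C : ℝ, ∀ z ∈ Metric.ball (0:ℂ) 1, ‖f z‖ ≤ C}

/-- The Bloch space. -/
def Bloch : Set (ℂ → ℂ) :=
  {f | HolOn f ∧ ∃ C : ℝ, ∀ z ∈ Metric.ball (0:ℂ) 1,
      (1 - ‖z‖ ^ 2) * ‖deriv f z‖ ≤ C}

/-- The little Bloch space: `(1-|z|²)|f'(z)| → 0` as `|z| → 1⁻`. -/
def littleBloch : Set (ℂ → ℂ) :=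
  {f | HolOn f ∧ ∀ ε : ℝ, 0 < ε → ∃ r : ℝ, r < 1 ∧ ∀ z ∈ Metric.ball (0:ℂ) 1,
      r < ‖z‖ → (1 - ‖z‖ ^ 2) * ‖deriv f z‖ < ε}

/-- The `α`-logarithmic Bloch space. -/
def BlochLog (α : ℝ) : Set (ℂ → ℂ) :=
  {f | HolOn f ∧ ∃ C : ℝ, ∀ z ∈ Metric.ball (0:ℂ) 1,
      (1 - ‖z‖ ^ 2) * (Real.log (2 / (1 - ‖z‖ ^ 2))) ^ α *
        ‖deriv f z‖ ≤ C}

/-- The Besov space `B¹`: holomorphic `f` with `∫_D |f''| dA < ∞`. -/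
def Besov1 : Set (ℂ → ℂ) :=
  {f | HolOn f ∧ ∫⁻ z in Metric.ball (0:ℂ) 1,
      ENNReal.ofReal (‖deriv (deriv f) z‖) ∂dA < ⊤}

/-- The Besov space `Bᵖ` (`1 < p < ∞`): `∫_D (1-|z|)^(p-2) |f'(z)|^p dA(z) < ∞`. -/
def Besov (p : ℝ) : Set (ℂ → ℂ) :=
  {f | HolOn f ∧ ∫⁻ z in Metric.ball (0:ℂ) 1,
      ENNReal.ofReal ((1 - ‖z‖) ^ (p - 2) * ‖deriv f z‖ ^ p) ∂dA < ⊤}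

open scoped Classical in
/-- The Besov space `Bᵖ` for all `1 ≤ p < ∞` (with the special definition at `p = 1`). -/
def BesovFull (p : ℝ) : Set (ℂ → ℂ) := if p = 1 then Besov1 else Besov p

/-- The Möbius transformation `φ_a(z) = (a-z)/(1 - conj a · z)`. -/
def phi (a z : ℂ) : ℂ := (a - z) / (1 - (starRingEnd ℂ) a * z)

/-- The space `Q_s`. -/
def Qs (s : ℝ) : Set (ℂ → ℂ) :=
  {f | HolOn f ∧ ⨆ a ∈ Metric.ball (0:ℂ) 1, ∫⁻ z in Metric.ball (0:ℂ) 1,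
      ENNReal.ofReal (‖deriv f z‖ ^ 2 *
        (1 - ‖phi a z‖ ^ 2) ^ s) ∂dA < ⊤}

/-- The space `Q_{s,log,α}`. -/
def QsLog (s α : ℝ) : Set (ℂ → ℂ) :=
  {f | HolOn f ∧ ⨆ a ∈ Metric.ball (0:ℂ) 1,
      (ENNReal.ofReal ((Real.log (2 / (1 - ‖a‖))) ^ (2 * α)) *
        ∫⁻ z in Metric.ball (0:ℂ) 1,
          ENNReal.ofReal (‖deriv f z‖ ^ 2 *
            (1 - ‖phi a z‖ ^ 2) ^ s) ∂dA) < ⊤}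

/-- The Volterra operator `T_g(f)(z) = ∫_0^z g'(ξ) f(ξ) dξ` (along the segment from 0 to z). -/
def Tg (g f : ℂ → ℂ) : ℂ → ℂ :=
  fun z => z * ∫ t in (0:ℝ)..1, deriv g ((t : ℂ) * z) * f ((t : ℂ) * z)

/-- The companion operator `I_g(f)(z) = ∫_0^z g(ξ) f'(ξ) dξ` (along the segment from 0 to z). -/
def Ig (g f : ℂ → ℂ) : ℂ → ℂ :=
  fun z => z * ∫ t in (0:ℝ)..1, g ((t : ℂ) * z) * deriv f ((t : ℂ) * z)

/-- The multiplication operator `M_g(f) = g · f`. -/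
def Mg (g f : ℂ → ℂ) : ℂ → ℂ := fun z => g z * f z

/-- `T` maps `X` into `Y`. -/
def MapsInto (T : (ℂ → ℂ) → (ℂ → ℂ)) (X Y : Set (ℂ → ℂ)) : Prop :=
  ∀ f ∈ X, T f ∈ Y

/-- The Hardy space `H^q`. -/
def Hardy (q : ℝ) : Set (ℂ → ℂ) :=
  {f | HolOn f ∧ ∃ C : ℝ, ∀ r : ℝ, 0 < r → r < 1 →
      (1 / (2 * π)) * ∫ t in (0:ℝ)..(2 * π),
        ‖f ((r : ℂ) * Complex.exp ((t : ℂ) * Complex.I))‖ ^ q ≤ C}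

/-- An inner function: bounded holomorphic with radial boundary values of modulus 1 a.e. -/
def IsInner (g : ℂ → ℂ) : Prop :=
  g ∈ Hinf ∧ ∀ᵐ t : ℝ ∂(volume.restrict (Set.Ioc (0:ℝ) (2 * π))),
    Filter.Tendsto (fun r : ℝ => ‖g ((r : ℂ) * Complex.exp ((t : ℂ) * Complex.I))‖)
      (nhdsWithin 1 (Set.Iio 1)) (nhds 1)

/-- `X` has the f-property (division by inner functions). -/
def FProperty (X : Set (ℂ → ℂ)) : Prop :=
  ∀ h ∈ X, ∀ g : ℂ → ℂ, IsInner g →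
    (fun z => h z / g z) ∈ Hardy 1 → (fun z => h z / g z) ∈ X

/-- The space of multipliers `M(X,Y)`. -/
def Mult (X Y : Set (ℂ → ℂ)) : Set (ℂ → ℂ) :=
  {g | HolOn g ∧ ∀ f ∈ X, (fun z => g z * f z) ∈ Y}

end

/-!
If `f''` is integrable over the disc, then integrating it along radii bounds the integral means of
`f'` over circles, and integrating `f'` along circles bounds the oscillation of `f` on them; hence
`B¹ ⊆ H^∞`, and `H^∞ ⊆ 𝓑` by the Cauchy estimate. This gives the sufficiency of `g ∈ H^∞`.

For the necessity, take the kernels `K_a(z) = (1 - |a|²)² / (1 - ā z)³`, for which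
`(1 - |a|²) K_a(a) = 1`. The derivative of `K_a` is `3 ā φ_a'²`, and `|φ_a'|²` is the Jacobian of
the disc automorphism `φ_a`, so `|K_a'|` has integral at most three times the area of the disc.
Hence every `ℓ¹`-combination of kernels is the derivative of a function in `B¹`, and applying the
uniform boundedness principle on `ℓ¹` to combinations of the `K_{a_n}` bounds `g` along an arbitrary
sequence `a_n`.
-/

open Asymptotics
open scoped ENNReal ComplexConjugate

local notation "𝔻" => Metric.ball (0 : ℂ) 1

section Growth

variable {f g : ℂ → ℂ} {z : ℂ}

lemma one_sub_norm_sq_pos (hz : ‖z‖ < 1) : 0 < 1 - ‖z‖ ^ 2 :=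
  sub_pos.2 (pow_lt_one₀ (norm_nonneg z) hz two_ne_zero)

lemma mem_Hinf_iff_isBigO : f ∈ Hinf ↔ HolOn f ∧ f =O[𝓟 𝔻] (1 : ℂ → ℝ) := by
  simp only [Hinf, mem_ofPred_eq, isBigO_principal, Pi.one_apply, norm_one, mul_one]

lemma isBigO_inv_one_sub_norm_sq_iff :
    (f =O[𝓟 𝔻] fun z => (1 - ‖z‖ ^ 2)⁻¹) ↔ ∃ C, ∀ z ∈ 𝔻, (1 - ‖z‖ ^ 2) * ‖f z‖ ≤ C := by
  rw [isBigO_principal]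
  refine exists_congr fun C => forall₂_congr fun z hz => ?_
  have hpos := one_sub_norm_sq_pos (mem_ball_zero_iff.1 hz)
  rw [norm_inv, Real.norm_of_nonneg hpos.le, ← div_eq_mul_inv, le_div_iff₀' hpos]

lemma mem_Bloch_iff_isBigO :
    f ∈ Bloch ↔ HolOn f ∧ deriv f =O[𝓟 𝔻] fun z => (1 - ‖z‖ ^ 2)⁻¹ :=
  and_congr_right fun _ => isBigO_inv_one_sub_norm_sq_iff.symm

lemma Mg_mem_Hinf (hg : g ∈ Hinf) (hf : f ∈ Hinf) : Mg g f ∈ Hinf := by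
  rw [mem_Hinf_iff_isBigO] at *
  exact ⟨hg.1.mul hf.1, (hg.2.mul hf.2).congr_right fun _ => mul_one 1⟩

lemma Hinf_subset_Bloch : Hinf ⊆ Bloch := by
  rintro f ⟨hf, C, hC⟩
  refine ⟨hf, 4 * C, fun z hz => ?_⟩
  have hR : 0 < (1 - ‖z‖) / 2 := half_pos (sub_pos.2 (mem_ball_zero_iff.1 hz))
  have hsub : closedBall z ((1 - ‖z‖) / 2) ⊆ 𝔻 := by
    refine closedBall_subset_ball' ?_
    rw [dist_zero_right]
    linarith
  have cauchy : ‖deriv f z‖ ≤ C / ((1 - ‖z‖) / 2) :=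
    norm_deriv_le_of_forall_mem_sphere_norm_le hR
      ((DifferentiableOn.mono hf hsub).diffContOnCl_ball subset_rfl)
      fun w hw => hC w (hsub (sphere_subset_closedBall hw))
  rw [le_div_iff₀ hR] at cauchy
  nlinarith [norm_nonneg (deriv f z), norm_nonneg z,
    mul_nonneg (norm_nonneg (deriv f z)) hR.le]

end Growth

section Companion

lemma hasDerivAt_smul_integral_segment {E : Type*} [NormedAddCommGroup E] [NormedSpace ℂ E]
    [CompleteSpace E] {h : ℂ → E} {R : ℝ} (hh : DifferentiableOn ℂ h (ball 0 R)) {z : ℂ}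
    (hz : z ∈ ball 0 R) :
    HasDerivAt (fun w => w • ∫ t in (0 : ℝ)..1, h (t * w)) (h z) z := by
  obtain ⟨H, hH⟩ := hh.isExactOn_ball
  suffices primitive : ∀ w ∈ ball (0 : ℂ) R, w • ∫ t in (0 : ℝ)..1, h (t * w) = H w - H 0 from
    ((hH z hz).sub_const (H 0)).congr_of_eventuallyEq
      (eventually_of_mem (isOpen_ball.mem_nhds hz) primitive)
  intro w hw
  have segment_mem : ∀ t ∈ Icc (0 : ℝ) 1, 0 + t • w ∈ ball (0 : ℂ) R := fun t ht =>
    (convex_ball 0 R).add_smul_mem (mem_ball_self (pos_of_mem_ball hw)) (by simpa using hw) ht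
  have hcont : ContinuousOn (fun t : ℝ => h (0 + t • w)) (Icc 0 1) :=
    hh.continuousOn.comp (by fun_prop) segment_mem
  simpa using intervalIntegral.integral_unitInterval_deriv_eq_sub hcont
    fun t ht => hH _ (segment_mem t ht)

variable {f g : ℂ → ℂ}

lemma hasDerivAt_Ig (hg : HolOn g) (hf : HolOn f) {z : ℂ} (hz : z ∈ 𝔻) :
    HasDerivAt (Ig g f) (g z * deriv f z) z :=
  hasDerivAt_smul_integral_segment (hg.mul (hf.deriv isOpen_ball)) hz

lemma holOn_Ig (hg : HolOn g) (hf : HolOn f) : HolOn (Ig g f) := fun _ hz =>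
  (hasDerivAt_Ig hg hf hz).differentiableAt.differentiableWithinAt

lemma eqOn_deriv_Ig (hg : HolOn g) (hf : HolOn f) :
    EqOn (deriv (Ig g f)) (fun z => g z * deriv f z) 𝔻 := fun _ hz =>
  (hasDerivAt_Ig hg hf hz).deriv

lemma eqOn_deriv_Mg (hg : HolOn g) (hf : HolOn f) :
    EqOn (deriv (Mg g f)) (fun z => deriv g z * f z + g z * deriv f z) 𝔻 := fun _ hz =>
  deriv_fun_mul (hg.differentiableAt (isOpen_ball.mem_nhds hz))
    (hf.differentiableAt (isOpen_ball.mem_nhds hz))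

end Companion

section Paths

variable {E : Type*} [NormedAddCommGroup E] [NormedSpace ℂ E] [CompleteSpace E]
  {f h : ℂ → E} {U : Set ℂ} {c z w : ℂ} {r r₀ R : ℝ}

lemma enorm_sub_le_lintegral_deriv_along_path (hf : DifferentiableOn ℂ f U) (hU : IsOpen U)
    {γ : ℝ → ℂ} (hγ : ContDiff ℝ 1 γ) {a b : ℝ} (hab : a ≤ b) (hγU : MapsTo γ (Icc a b) U) :
    ‖f (γ b) - f (γ a)‖ₑ ≤ ∫⁻ t in Icc a b, ‖deriv γ t‖ₑ * ‖deriv f (γ t)‖ₑ := by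
  have hC1 : ContDiffOn ℝ 1 (f ∘ γ) (Icc a b) :=
    ((hf.contDiffOn hU).restrict_scalars ℝ).comp hγ.contDiffOn hγU
  refine (enorm_sub_le_lintegral_deriv_of_contDiffOn_Icc hC1 hab).trans_eq ?_
  refine setLIntegral_congr_fun measurableSet_Icc fun t ht => ?_
  have hfγ : HasDerivAt f (deriv f (γ t)) (γ t) :=
    (hf.differentiableAt (hU.mem_nhds (hγU ht))).hasDerivAt
  have hγt : HasDerivAt γ (deriv γ t) t := (hγ.differentiable one_ne_zero t).hasDerivAt
  rw [(hfγ.scomp_of_eq t hγt rfl).deriv, enorm_smul]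

lemma enorm_sub_le_lintegral_deriv_circleMap (hf : DifferentiableOn ℂ f U) (hU : IsOpen U)
    (hr : 0 ≤ r) (hsU : sphere c r ⊆ U) (hz : z ∈ sphere c r) (hw : w ∈ sphere c r) :
    ‖f z - f w‖ₑ ≤ ∫⁻ θ in Ioo (-π) π, ENNReal.ofReal r * ‖deriv f (circleMap c r θ)‖ₑ := by
  have arc : ∀ α ∈ Ioc (-π) π, ∀ β ∈ Ioc (-π) π, α ≤ β →
      ‖f (circleMap c r β) - f (circleMap c r α)‖ₑ ≤
        ∫⁻ θ in Ioo (-π) π, ENNReal.ofReal r * ‖deriv f (circleMap c r θ)‖ₑ := by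
    intro α hα β hβ hαβ
    have path := enorm_sub_le_lintegral_deriv_along_path hf hU (contDiff_circleMap c r) hαβ
      fun θ _ => hsU (circleMap_mem_sphere c hr θ)
    have speed : ∀ θ, ‖deriv (circleMap c r) θ‖ₑ = ENNReal.ofReal r := fun θ => by
      rw [deriv_circleMap, ← ofReal_norm, norm_mul, norm_circleMap_zero, norm_I, mul_one,
        abs_of_nonneg hr]
    simp only [speed] at path
    rw [restrict_Ioo_eq_restrict_Ioc]
    exact path.trans (lintegral_mono_set (Icc_subset_Ioc_iff hαβ |>.2 ⟨hα.1, hβ.2⟩))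
  have angle : ∀ z ∈ sphere c r, ∃ α ∈ Ioc (-π) π, circleMap c r α = z := fun z hz =>
    ⟨arg (z - c), arg_mem_Ioc _, by
      rw [circleMap, ← mem_sphere_iff_norm.1 hz, norm_mul_exp_arg_mul_I, add_sub_cancel]⟩
  obtain ⟨α, hα, rfl⟩ := angle z hz
  obtain ⟨β, hβ, rfl⟩ := angle w hw
  rcases le_total α β with hαβ | hβα
  · rw [enorm_sub_rev]
    exact arc α hα β hβ hαβ
  · exact arc β hβ α hα hβα

lemma preimage_circleMap_ball_inter_polarCoord_target (c : ℂ) (R : ℝ) :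
    (fun p : ℝ × ℝ => circleMap c p.1 p.2) ⁻¹' ball c R ∩ Complex.polarCoord.target =
      Ioo 0 R ×ˢ Ioo (-π) π := by
  ext ⟨s, θ⟩
  simp only [Complex.polarCoord_target, mem_inter_iff, mem_preimage, mem_prod, mem_Ioi, mem_Ioo,
    mem_ball, dist_eq_norm, circleMap_sub_center, norm_circleMap_zero]
  constructor
  · rintro ⟨hs, hs0, hθ⟩
    exact ⟨⟨hs0, (le_abs_self s).trans_lt hs⟩, hθ⟩
  · rintro ⟨⟨hs0, hs⟩, hθ⟩
    exact ⟨by rwa [abs_of_pos hs0], hs0, hθ⟩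

lemma lintegral_ball_eq_lintegral_circleMap {F : ℂ → ℝ≥0∞} (hF : Measurable F) (c : ℂ) (R : ℝ) :
    ∫⁻ z in ball c R, F z =
      ∫⁻ θ in Ioo (-π) π, ∫⁻ s in Ioo 0 R, ENNReal.ofReal s * F (circleMap c s θ) := by
  have polar : ∀ p : ℝ × ℝ, c + Complex.polarCoord.symm p = circleMap c p.1 p.2 := fun p => by
    rw [Complex.polarCoord_symm_apply, circleMap, exp_mul_I, ofReal_cos, ofReal_sin]
  have hmeas : Measurable fun p : ℝ × ℝ => circleMap c p.1 p.2 := by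
    unfold circleMap
    fun_prop
  have hball : MeasurableSet ((fun p : ℝ × ℝ => circleMap c p.1 p.2) ⁻¹' ball c R) :=
    hmeas measurableSet_ball
  calc ∫⁻ z in ball c R, F z
      = ∫⁻ p in Complex.polarCoord.target,
          ENNReal.ofReal p.1 • (ball c R).indicator F (c + Complex.polarCoord.symm p) := by
        rw [← lintegral_indicator measurableSet_ball, ← lintegral_add_left_eq_self _ c,
          ← Complex.lintegral_comp_polarCoord_symm]
        rfl
    _ = ∫⁻ p in Complex.polarCoord.target,
          ((fun p : ℝ × ℝ => circleMap c p.1 p.2) ⁻¹' ball c R).indicator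
            (fun p => ENNReal.ofReal p.1 * F (circleMap c p.1 p.2)) p := by
        refine lintegral_congr fun p => ?_
        classical
        simp only [polar, smul_eq_mul, indicator_apply, mem_preimage, mul_ite, mul_zero]
    _ = ∫⁻ θ in Ioo (-π) π, ∫⁻ s in Ioo 0 R, ENNReal.ofReal s * F (circleMap c s θ) := by
        rw [setLIntegral_indicator hball, preimage_circleMap_ball_inter_polarCoord_target,
          Measure.volume_eq_prod, setLIntegral_prod_symm]
        fun_prop

lemma enorm_sub_le_lintegral_deriv_radial (hh : DifferentiableOn ℂ h (ball c R))
    (hr₀ : 0 < r₀) (hr : r₀ ≤ r) (hrR : r < R) (θ : ℝ) :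
    ‖h (circleMap c r θ) - h (circleMap c r₀ θ)‖ₑ ≤ (ENNReal.ofReal r₀)⁻¹ *
      ∫⁻ s in Ioo 0 R, ENNReal.ofReal s * ‖deriv h (circleMap c s θ)‖ₑ := by
  have hγ : ContDiff ℝ 1 fun s : ℝ => circleMap c s θ :=
    contDiff_const.add (ofRealCLM.contDiff.mul contDiff_const)
  have speed : ∀ s, ‖deriv (fun s : ℝ => circleMap c s θ) s‖ₑ = 1 := fun s => by
    have hs : HasDerivAt (fun s : ℝ => circleMap c s θ) (1 * exp (θ * I)) s :=
      (((hasDerivAt_id (s : ℂ)).comp_ofReal).mul_const _).const_add c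
    rw [hs.deriv, one_mul, ← ofReal_norm, norm_exp_ofReal_mul_I, ENNReal.ofReal_one]
  have hball : MapsTo (fun s : ℝ => circleMap c s θ) (Icc r₀ r) (ball c R) := fun s hs => by
    rw [mem_ball, dist_eq_norm, circleMap_sub_center, norm_circleMap_zero,
      abs_of_pos (hr₀.trans_le hs.1)]
    exact hs.2.trans_lt hrR
  have one_le : ∀ s ∈ Icc r₀ r, 1 ≤ (ENNReal.ofReal r₀)⁻¹ * ENNReal.ofReal s := fun s hs => by
    rw [← ENNReal.inv_mul_cancel (ENNReal.ofReal_pos.2 hr₀).ne' ENNReal.ofReal_ne_top]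
    gcongr
    exact hs.1
  calc ‖h (circleMap c r θ) - h (circleMap c r₀ θ)‖ₑ
      ≤ ∫⁻ s in Icc r₀ r, 1 * ‖deriv h (circleMap c s θ)‖ₑ := by
        simpa only [speed] using enorm_sub_le_lintegral_deriv_along_path hh isOpen_ball hγ hr hball
    _ ≤ ∫⁻ s in Icc r₀ r, (ENNReal.ofReal r₀)⁻¹ *
          (ENNReal.ofReal s * ‖deriv h (circleMap c s θ)‖ₑ) :=
        setLIntegral_mono' measurableSet_Icc fun s hs => by
          rw [← mul_assoc]
          gcongr
          exact one_le s hs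
    _ ≤ (ENNReal.ofReal r₀)⁻¹ *
          ∫⁻ s in Ioo 0 R, ENNReal.ofReal s * ‖deriv h (circleMap c s θ)‖ₑ := by
        rw [lintegral_const_mul' _ _ (ENNReal.inv_ne_top.2 (ENNReal.ofReal_pos.2 hr₀).ne')]
        gcongr
        exact Icc_subset_Ioo hr₀ hrR

lemma lintegral_circleMap_le [MeasurableSpace E] [BorelSpace E]
    (hh : DifferentiableOn ℂ h (ball c R)) (hr₀ : 0 < r₀) (hr : r₀ ≤ r) (hrR : r < R) :
    ∫⁻ θ in Ioo (-π) π, ‖h (circleMap c r θ)‖ₑ ≤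
      (∫⁻ θ in Ioo (-π) π, ‖h (circleMap c r₀ θ)‖ₑ) +
        (ENNReal.ofReal r₀)⁻¹ * ∫⁻ z in ball c R, ‖deriv h z‖ₑ := by
  have hcont : Continuous fun θ => ‖h (circleMap c r₀ θ)‖ₑ :=
    (hh.continuousOn.comp_continuous (continuous_circleMap c r₀) fun θ =>
      closedBall_subset_ball (hr.trans_lt hrR) (circleMap_mem_closedBall c hr₀.le θ)).enorm
  rw [lintegral_ball_eq_lintegral_circleMap (measurable_deriv h).enorm,
    ← lintegral_const_mul' _ _ (ENNReal.inv_ne_top.2 (ENNReal.ofReal_pos.2 hr₀).ne'),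
    ← lintegral_add_left hcont.measurable]
  refine lintegral_mono fun θ => ?_
  calc ‖h (circleMap c r θ)‖ₑ
      ≤ ‖h (circleMap c r₀ θ)‖ₑ + ‖h (circleMap c r θ) - h (circleMap c r₀ θ)‖ₑ := by
        simpa using enorm_add_le (h (circleMap c r₀ θ))
          (h (circleMap c r θ) - h (circleMap c r₀ θ))
    _ ≤ _ := by
        gcongr
        exact enorm_sub_le_lintegral_deriv_radial hh hr₀ hr hrR θ

end Paths

section Inclusion

variable {E : Type*} [NormedAddCommGroup E]

lemma norm_sub_le_of_forall_mem_sphere_norm_sub_le [NormedSpace ℂ E] {f : ℂ → E} {c : ℂ}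
    {r M : ℝ} (hr : r ≠ 0) (hf : DiffContOnCl ℂ f (ball c r))
    (hM : ∀ z ∈ sphere c r, ∀ w ∈ sphere c r, ‖f z - f w‖ ≤ M) :
    ∀ z ∈ closedBall c r, ∀ w ∈ closedBall c r, ‖f z - f w‖ ≤ M := by
  have half : ∀ z ∈ closedBall c r, ∀ w ∈ sphere c r, ‖f z - f w‖ ≤ M := fun z hz w hw =>
    norm_le_of_forall_mem_frontier_norm_le isBounded_ball (hf.sub_const (f w))
      (by rw [frontier_ball c hr]; exact fun z' hz' => hM z' hz' w hw)
      (by rwa [closure_ball c hr])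
  intro z hz w hw
  refine norm_le_of_forall_mem_frontier_norm_le isBounded_ball (hf.const_sub (f z)) ?_
    (by rwa [closure_ball c hr])
  rw [frontier_ball c hr]
  exact half z hz

lemma lintegral_enorm_circleMap_lt_top {h : ℂ → E} {c : ℂ} {r : ℝ} (hr : 0 ≤ r)
    (hh : ContinuousOn h (sphere c r)) : ∫⁻ θ in Ioo (-π) π, ‖h (circleMap c r θ)‖ₑ < ⊤ := by
  have hcont : Continuous fun θ => h (circleMap c r θ) :=
    hh.comp_continuous (continuous_circleMap c r) (circleMap_mem_sphere c hr)
  rw [restrict_Ioo_eq_restrict_Ioc]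
  exact hcont.integrableOn_Ioc.hasFiniteIntegral

lemma mem_Besov1_iff {f : ℂ → ℂ} :
    f ∈ Besov1 ↔ HolOn f ∧ ∫⁻ z in 𝔻, ‖deriv (deriv f) z‖ₑ < ⊤ := by
  refine and_congr_right fun _ => ?_
  have hπ : (ENNReal.ofReal π)⁻¹ ≠ 0 := ENNReal.inv_ne_zero.2 ENNReal.ofReal_ne_top
  have hπ' : (ENNReal.ofReal π)⁻¹ ≠ ⊤ := ENNReal.inv_ne_top.2 (ENNReal.ofReal_pos.2 pi_pos).ne'
  simp only [dA, Measure.restrict_smul, lintegral_smul_measure, ofReal_norm, smul_eq_mul,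
    lt_top_iff_ne_top, ne_eq, ENNReal.mul_eq_top, hπ, hπ', not_false_eq_true, true_and, false_and,
    or_false]

lemma Besov1_subset_Hinf : Besov1 ⊆ Hinf := by
  intro f hfB
  obtain ⟨hf, hf''⟩ := mem_Besov1_iff.1 hfB
  have hf' : DifferentiableOn ℂ (deriv f) 𝔻 := DifferentiableOn.deriv hf isOpen_ball
  set M : ℝ≥0∞ := (∫⁻ θ in Ioo (-π) π, ‖deriv f (circleMap 0 (1 / 2) θ)‖ₑ) +
    (ENNReal.ofReal (1 / 2))⁻¹ * ∫⁻ z in 𝔻, ‖deriv (deriv f) z‖ₑ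
  have hM_top : M ≠ ⊤ := by
    refine ENNReal.add_ne_top.2 ⟨?_, ENNReal.mul_ne_top (by simp) hf''.ne⟩
    exact (lintegral_enorm_circleMap_lt_top (by norm_num)
      (hf'.continuousOn.mono (sphere_subset_ball (by norm_num)))).ne
  have osc : ∀ r, 1 / 2 ≤ r → r < 1 → ∀ z ∈ sphere (0 : ℂ) r, ∀ w ∈ sphere (0 : ℂ) r,
      ‖f z - f w‖ ≤ M.toReal := by
    intro r hr hr1 z hz w hw
    rw [← toReal_enorm]
    refine ENNReal.toReal_mono hM_top ?_
    calc ‖f z - f w‖ₑ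
        ≤ ∫⁻ θ in Ioo (-π) π, ENNReal.ofReal r * ‖deriv f (circleMap 0 r θ)‖ₑ :=
          enorm_sub_le_lintegral_deriv_circleMap hf isOpen_ball (by linarith)
            (sphere_subset_ball hr1) hz hw
      _ ≤ ∫⁻ θ in Ioo (-π) π, ‖deriv f (circleMap 0 r θ)‖ₑ :=
          lintegral_mono fun θ => mul_le_of_le_one_left' (ENNReal.ofReal_le_one.2 hr1.le)
      _ ≤ M := lintegral_circleMap_le hf' (by norm_num) hr hr1
  refine ⟨hf, M.toReal + ‖f 0‖, fun z hz => ?_⟩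
  have hr1 : max (1 / 2) ‖z‖ < 1 := max_lt (by norm_num) (mem_ball_zero_iff.1 hz)
  have hr0 : 0 < max (1 / 2) ‖z‖ := lt_max_of_lt_left (by norm_num)
  have hz0 : ‖f z - f 0‖ ≤ M.toReal :=
    norm_sub_le_of_forall_mem_sphere_norm_sub_le hr0.ne'
      ((DifferentiableOn.mono hf (closedBall_subset_ball hr1)).diffContOnCl_ball subset_rfl)
      (osc _ (le_max_left _ _) hr1) z (mem_closedBall_zero_iff.2 (le_max_right _ _)) 0
      (mem_closedBall_self hr0.le)
  linarith [norm_sub_norm_le (f z) (f 0)]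

end Inclusion

section Kernel

variable {a z : ℂ}

lemma one_sub_norm_le_norm_one_sub_conj_mul (ha : ‖a‖ < 1) (z : ℂ) :
    1 - ‖z‖ ≤ ‖1 - conj a * z‖ := by
  have h := norm_sub_norm_le (1 : ℂ) (conj a * z)
  rw [norm_one, norm_mul, RCLike.norm_conj] at h
  linarith [mul_le_of_le_one_left (norm_nonneg z) ha.le]

lemma one_sub_conj_mul_ne_zero (ha : ‖a‖ < 1) (hz : ‖z‖ < 1) : 1 - conj a * z ≠ 0 :=
  norm_pos_iff.1 ((sub_pos.2 hz).trans_le (one_sub_norm_le_norm_one_sub_conj_mul ha z))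

lemma one_sub_conj_mul_self (a : ℂ) : 1 - conj a * a = ((1 - ‖a‖ ^ 2 : ℝ) : ℂ) := by
  rw [conj_mul', ofReal_sub, ofReal_one, ofReal_pow]

lemma hasDerivAt_one_sub_conj_mul (a z : ℂ) :
    HasDerivAt (fun z => 1 - conj a * z) (-conj a) z := by
  simpa using ((hasDerivAt_id z).const_mul (conj a)).const_sub 1

lemma norm_one_sub_conj_mul_sq_sub_norm_sub_sq (a z : ℂ) :
    ‖1 - conj a * z‖ ^ 2 - ‖a - z‖ ^ 2 = (1 - ‖a‖ ^ 2) * (1 - ‖z‖ ^ 2) := by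
  simp only [← normSq_eq_norm_sq, normSq_apply, sub_re, sub_im, one_re, one_im, mul_re, mul_im,
    conj_re, conj_im]
  ring

lemma mapsTo_phi (ha : ‖a‖ < 1) : MapsTo (phi a) 𝔻 𝔻 := by
  intro z hz
  rw [mem_ball_zero_iff] at *
  rw [phi, norm_div, div_lt_one (norm_pos_iff.2 (one_sub_conj_mul_ne_zero ha hz))]
  refine lt_of_pow_lt_pow_left₀ 2 (norm_nonneg _) (sub_pos.1 ?_)
  rw [norm_one_sub_conj_mul_sq_sub_norm_sub_sq]
  exact mul_pos (one_sub_norm_sq_pos ha) (one_sub_norm_sq_pos hz)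

lemma injOn_phi (ha : ‖a‖ < 1) : InjOn (phi a) 𝔻 := by
  intro z hz w hw h
  rw [mem_ball_zero_iff] at hz hw
  rw [phi, phi, div_eq_div_iff (one_sub_conj_mul_ne_zero ha hz)
    (one_sub_conj_mul_ne_zero ha hw)] at h
  have hmul : (1 - conj a * a) * (w - z) = 0 := by linear_combination h
  exact (sub_eq_zero.1 ((mul_eq_zero.1 hmul).resolve_left (one_sub_conj_mul_ne_zero ha ha))).symm

lemma hasDerivAt_phi (ha : ‖a‖ < 1) (hz : ‖z‖ < 1) :
    HasDerivAt (phi a) (-(1 - conj a * a) / (1 - conj a * z) ^ 2) z := by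
  refine (((hasDerivAt_id z).const_sub a).div (hasDerivAt_one_sub_conj_mul a z)
    (one_sub_conj_mul_ne_zero ha hz)).congr_deriv ?_
  simp only [id]
  ring

/-- The derivative of the test function `z ↦ (1 - |a|²)² / (2 ā (1 - ā z)²)` of the Besov space,
scaled so that `(1 - |a|²) * besovKernel a a = 1`; working with the derivative rather than the test
function itself avoids the singular case `a = 0`. -/
noncomputable def besovKernel (a z : ℂ) : ℂ := (1 - conj a * a) ^ 2 / (1 - conj a * z) ^ 3

lemma one_sub_norm_sq_mul_besovKernel_self (ha : ‖a‖ < 1) :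
    ((1 - ‖a‖ ^ 2 : ℝ) : ℂ) * besovKernel a a = 1 := by
  have h0 := one_sub_conj_mul_ne_zero ha ha
  rw [besovKernel, ← one_sub_conj_mul_self, ← mul_div_assoc, ← pow_succ',
    div_self (pow_ne_zero 3 h0)]

lemma norm_besovKernel_le (ha : ‖a‖ < 1) (hz : ‖z‖ < 1) :
    ‖besovKernel a z‖ ≤ ((1 - ‖z‖) ^ 3)⁻¹ := by
  have : 0 < 1 - ‖z‖ := sub_pos.2 hz
  have hnum : ‖(1 - conj a * a) ^ 2‖ ≤ 1 := by
    rw [one_sub_conj_mul_self, norm_pow, norm_real,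
      Real.norm_of_nonneg (one_sub_norm_sq_pos ha).le]
    exact pow_le_one₀ (one_sub_norm_sq_pos ha).le (sub_le_self 1 (sq_nonneg ‖a‖))
  rw [besovKernel, norm_div, norm_pow (1 - conj a * z), ← one_div]
  gcongr
  exact one_sub_norm_le_norm_one_sub_conj_mul ha z

lemma hasDerivAt_besovKernel (ha : ‖a‖ < 1) (hz : ‖z‖ < 1) :
    HasDerivAt (besovKernel a) (3 * conj a * (-(1 - conj a * a) / (1 - conj a * z) ^ 2) ^ 2) z := by
  have h0 := one_sub_conj_mul_ne_zero ha hz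
  refine ((hasDerivAt_const z ((1 - conj a * a) ^ 2)).div ((hasDerivAt_one_sub_conj_mul a z).pow 3)
    (pow_ne_zero 3 h0)).congr_deriv ?_
  simp only [Pi.pow_apply]
  field_simp
  ring

lemma differentiableOn_besovKernel (ha : ‖a‖ < 1) : DifferentiableOn ℂ (besovKernel a) 𝔻 :=
  fun _ hz => (hasDerivAt_besovKernel ha
    (mem_ball_zero_iff.1 hz)).differentiableAt.differentiableWithinAt

lemma lintegral_enorm_deriv_sq_eq_volume_image {f : ℂ → ℂ} {s : Set ℂ} (hs : MeasurableSet s)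
    (hf : ∀ z ∈ s, DifferentiableAt ℂ f z) (hinj : InjOn f s) :
    ∫⁻ z in s, ‖deriv f z‖ₑ ^ 2 = volume (f '' s) := by
  have jacobian : ∀ c : ℂ,
      ((ContinuousLinearMap.toSpanSingleton ℂ c).restrictScalars ℝ).det = ‖c‖ ^ 2 := fun c => by
    rw [← normSq_eq_norm_sq]
    change LinearMap.det ((LinearMap.toSpanSingleton ℂ ℂ c).restrictScalars ℝ) = normSq c
    rw [LinearMap.det_restrictScalars, Algebra.norm_complex_eq]
    simp
  rw [← lintegral_abs_det_fderiv_eq_addHaar_image volume hs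
    (fun z hz => ((hf z hz).hasDerivAt.hasFDerivAt.restrictScalars ℝ).hasFDerivWithinAt) hinj]
  refine lintegral_congr fun z => ?_
  rw [jacobian, abs_of_nonneg (sq_nonneg _), ENNReal.ofReal_pow (norm_nonneg _), ofReal_norm]

lemma lintegral_enorm_deriv_besovKernel_le (ha : ‖a‖ < 1) :
    ∫⁻ z in 𝔻, ‖deriv (besovKernel a) z‖ₑ ≤ 3 * volume 𝔻 := by
  have three_conj : ‖3 * conj a‖ₑ ≤ 3 := by
    rw [← ofReal_norm, ← ENNReal.ofReal_ofNat 3, norm_mul, RCLike.norm_conj, Complex.norm_ofNat]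
    gcongr
    linarith
  calc ∫⁻ z in 𝔻, ‖deriv (besovKernel a) z‖ₑ
      ≤ ∫⁻ z in 𝔻, 3 * ‖deriv (phi a) z‖ₑ ^ 2 := by
        refine setLIntegral_mono' measurableSet_ball fun z hz => ?_
        rw [mem_ball_zero_iff] at hz
        rw [(hasDerivAt_besovKernel ha hz).deriv, (hasDerivAt_phi ha hz).deriv, enorm_mul,
          enorm_pow]
        gcongr
    _ = 3 * volume (phi a '' 𝔻) := by
        rw [lintegral_const_mul' _ _ ENNReal.ofNat_ne_top,
          lintegral_enorm_deriv_sq_eq_volume_image measurableSet_ball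
            (fun z hz => (hasDerivAt_phi ha (mem_ball_zero_iff.1 hz)).differentiableAt)
            (injOn_phi ha)]
    _ ≤ 3 * volume 𝔻 := by
        gcongr
        exact (mapsTo_phi ha).image_subset

end Kernel

section Series

variable {ι : Type*} {c : ι → ℂ} {F : ι → ℂ → ℂ} {U : Set ℂ}

lemma hasDerivAt_tsum_mul (hc : Summable fun k => ‖c k‖) (hU : IsOpen U)
    (hF : ∀ k, DifferentiableOn ℂ (F k) U) {B : ℝ} (hB : ∀ k, ∀ w ∈ U, ‖F k w‖ ≤ B) {z : ℂ}
    (hz : z ∈ U) :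
    HasDerivAt (fun w => ∑' k, c k * F k w) (∑' k, c k * deriv (F k) z) z := by
  have hd : ∀ k, DifferentiableOn ℂ (fun w => c k * F k w) U := fun k => (hF k).const_mul (c k)
  have hb : ∀ k, ∀ w ∈ U, ‖c k * F k w‖ ≤ ‖c k‖ * B := fun k w hw => by
    rw [norm_mul]
    gcongr
    exact hB k w hw
  have termwise : deriv (fun w => ∑' k, c k * F k w) z = ∑' k, c k * deriv (F k) z := by
    rw [← (hasSum_deriv_of_summable_norm (hc.mul_right B) hd hU hb hz).tsum_eq]
    exact tsum_congr fun k => deriv_const_mul _ ((hF k).differentiableAt (hU.mem_nhds hz))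
  rw [← termwise]
  exact ((differentiableOn_tsum_of_summable_norm (hc.mul_right B) hd hU hb).differentiableAt
    (hU.mem_nhds hz)).hasDerivAt

lemma lintegral_enorm_tsum_mul_le {α : Type*} [MeasurableSpace α] {μ : Measure α} [Countable ι]
    (c : ι → ℂ) {G : ι → α → ℂ} (hG : ∀ k, AEMeasurable (G k) μ) {B : ℝ≥0∞}
    (hB : ∀ k, ∫⁻ x, ‖G k x‖ₑ ∂μ ≤ B) :
    ∫⁻ x, ‖∑' k, c k * G k x‖ₑ ∂μ ≤ (∑' k, ‖c k‖ₑ) * B :=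
  calc ∫⁻ x, ‖∑' k, c k * G k x‖ₑ ∂μ
      ≤ ∫⁻ x, ∑' k, ‖c k * G k x‖ₑ ∂μ := lintegral_mono fun _ => enorm_tsum_le_tsum_enorm
    _ = ∑' k, ‖c k‖ₑ * ∫⁻ x, ‖G k x‖ₑ ∂μ := by
        rw [lintegral_tsum fun k => ((hG k).const_mul (c k)).enorm]
        simp only [enorm_mul, lintegral_const_mul' _ _ enorm_ne_top]
    _ ≤ ∑' k, ‖c k‖ₑ * B := by
        gcongr with k
        exact hB k
    _ = (∑' k, ‖c k‖ₑ) * B := ENNReal.tsum_mul_right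

lemma hasDerivAt_tsum_besovKernel {a : ι → ℂ} (ha : ∀ k, ‖a k‖ < 1)
    (hc : Summable fun k => ‖c k‖) {z : ℂ} (hz : z ∈ 𝔻) :
    HasDerivAt (fun w => ∑' k, c k * besovKernel (a k) w)
      (∑' k, c k * deriv (besovKernel (a k)) z) z := by
  obtain ⟨r, hzr, hr⟩ := exists_between (mem_ball_zero_iff.1 hz)
  refine hasDerivAt_tsum_mul hc (isOpen_ball (x := 0) (ε := r)) (B := ((1 - r) ^ 3)⁻¹)
    (fun k => (differentiableOn_besovKernel (ha k)).mono (ball_subset_ball hr.le))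
    (fun k w hw => ?_) (mem_ball_zero_iff.2 hzr)
  rw [mem_ball_zero_iff] at hw
  have : 0 < 1 - r := sub_pos.2 hr
  refine (norm_besovKernel_le (ha k) (hw.trans hr)).trans ?_
  gcongr

lemma exists_mem_Besov1_deriv_eq_tsum_besovKernel [Countable ι] {a : ι → ℂ}
    (ha : ∀ k, ‖a k‖ < 1) (hc : Summable fun k => ‖c k‖) :
    ∃ f ∈ Besov1, ∀ z ∈ 𝔻, deriv f z = ∑' k, c k * besovKernel (a k) z := by
  have hS : DifferentiableOn ℂ (fun z => ∑' k, c k * besovKernel (a k) z) 𝔻 := fun z hz =>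
    (hasDerivAt_tsum_besovKernel ha hc hz).differentiableAt.differentiableWithinAt
  obtain ⟨f, hf⟩ := hS.isExactOn_ball
  have hf' : EqOn (deriv f) (fun z => ∑' k, c k * besovKernel (a k) z) 𝔻 := fun z hz =>
    (hf z hz).deriv
  have hf'' : EqOn (deriv (deriv f)) (fun z => ∑' k, c k * deriv (besovKernel (a k)) z) 𝔻 :=
    fun z hz => (hf'.deriv isOpen_ball hz).trans (hasDerivAt_tsum_besovKernel ha hc hz).deriv
  refine ⟨f, mem_Besov1_iff.2 ⟨fun z hz => (hf z hz).differentiableAt.differentiableWithinAt, ?_⟩,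
    hf'⟩
  calc ∫⁻ z in 𝔻, ‖deriv (deriv f) z‖ₑ
      = ∫⁻ z in 𝔻, ‖∑' k, c k * deriv (besovKernel (a k)) z‖ₑ :=
        setLIntegral_congr_fun measurableSet_ball fun z hz => congrArg enorm (hf'' hz)
    _ ≤ (∑' k, ‖c k‖ₑ) * (3 * volume 𝔻) :=
        lintegral_enorm_tsum_mul_le c (fun k => (measurable_deriv _).aemeasurable)
          fun k => lintegral_enorm_deriv_besovKernel_le (ha k)
    _ < ⊤ := ENNReal.mul_lt_top (tsum_enorm_ne_top_iff_summable_norm.2 hc).lt_top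
        (ENNReal.mul_lt_top (by simp) measure_ball_lt_top)

end Series

section UniformBoundedness

variable {𝕜 : Type*} [RCLike 𝕜] {κ ι : Type*}

lemma exists_lp_one_clm_eq_tsum {b : ι → 𝕜} (hb : Memℓp b ⊤) :
    ∃ L : lp (fun _ : ι => 𝕜) 1 →L[𝕜] 𝕜, ∀ c, L c = ∑' k, c k * b k :=
  ⟨lp.dualPairing ⊤ 1 (fun _ => ContinuousLinearMap.mul 𝕜 𝕜) (K := 1)
    (fun _ => by simp) ⟨b, hb⟩, fun c =>
      (lp.dualPairing_apply ..).trans (tsum_congr fun k => mul_comm (b k) (c k))⟩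

lemma exists_forall_norm_le_of_forall_summable {b : κ → ι → 𝕜}
    (hb : ∀ n, ∃ B, ∀ k, ‖b n k‖ ≤ B)
    (H : ∀ c : ι → 𝕜, (Summable fun k => ‖c k‖) → ∃ C, ∀ n, ‖∑' k, c k * b n k‖ ≤ C) :
    ∃ C, ∀ n k, ‖b n k‖ ≤ C := by
  classical
  choose L hL using fun n => exists_lp_one_clm_eq_tsum (b := b n)
    (memℓp_infty ((hb n).imp fun B hB => forall_mem_range.2 hB))
  have pointwise : ∀ c, ∃ C, ∀ n, ‖L n c‖ ≤ C := fun c => by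
    simp only [hL]
    exact H c (by simpa using (lp.memℓp c).summable (by simp))
  obtain ⟨C, hC⟩ := banach_steinhaus pointwise
  refine ⟨C, fun n k => ?_⟩
  have single : L n (lp.single 1 k 1) = b n k := by
    rw [hL, tsum_eq_single k fun j hj => by rw [lp.single_apply_ne _ _ _ hj, zero_mul],
      lp.single_apply_self, one_mul]
  calc ‖b n k‖ = ‖L n (lp.single 1 k 1)‖ := by rw [single]
    _ ≤ ‖L n‖ * ‖lp.single (E := fun _ : ι => 𝕜) 1 k 1‖ := (L n).le_opNorm _
    _ ≤ C := by
      rw [lp.norm_single one_pos, norm_one, mul_one]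
      exact hC n

end UniformBoundedness

section Multipliers

lemma mem_Hinf_of_forall_isBigO_mul_deriv {g : ℂ → ℂ} (hg : HolOn g)
    (H : ∀ f ∈ Besov1, (fun z => g z * deriv f z) =O[𝓟 𝔻] fun z => (1 - ‖z‖ ^ 2)⁻¹) :
    g ∈ Hinf := by
  suffices bounded_on_sequences : ∀ a : ℕ → ℂ, (∀ n, a n ∈ 𝔻) → ∃ C, ∀ n, ‖g (a n)‖ ≤ C by
    refine ⟨hg, ?_⟩
    by_contra! unbounded
    choose a ha hga using fun n : ℕ => unbounded n
    obtain ⟨C, hC⟩ := bounded_on_sequences a ha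
    obtain ⟨n, hn⟩ := exists_nat_gt C
    exact (hn.trans (hga n)).not_ge (hC n)
  intro a ha
  have ha1 : ∀ n, ‖a n‖ < 1 := fun n => mem_ball_zero_iff.1 (ha n)
  let b : ℕ → ℕ → ℂ := fun n k =>
    ((1 - ‖a n‖ ^ 2 : ℝ) : ℂ) * g (a n) * besovKernel (a k) (a n)
  have row_bounded : ∀ n, ∃ B, ∀ k, ‖b n k‖ ≤ B := fun n =>
    ⟨‖((1 - ‖a n‖ ^ 2 : ℝ) : ℂ) * g (a n)‖ * ((1 - ‖a n‖) ^ 3)⁻¹, fun k =>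
      (norm_mul_le _ _).trans (by gcongr; exact norm_besovKernel_le (ha1 k) (ha1 n))⟩
  have pointwise_bounded : ∀ c : ℕ → ℂ, (Summable fun k => ‖c k‖) →
      ∃ C, ∀ n, ‖∑' k, c k * b n k‖ ≤ C := by
    intro c hc
    obtain ⟨f, hf, hf'⟩ := exists_mem_Besov1_deriv_eq_tsum_besovKernel ha1 hc
    obtain ⟨C, hC⟩ := isBigO_inv_one_sub_norm_sq_iff.1 (H f hf)
    refine ⟨C, fun n => ?_⟩
    have hsum : ∑' k, c k * b n k = ((1 - ‖a n‖ ^ 2 : ℝ) : ℂ) * (g (a n) * deriv f (a n)) := by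
      simp only [b, hf' _ (ha n), mul_left_comm (c _), tsum_mul_left, mul_assoc]
    rw [hsum, norm_mul, norm_real, Real.norm_of_nonneg (one_sub_norm_sq_pos (ha1 n)).le]
    exact hC _ (ha n)
  obtain ⟨C, hC⟩ := exists_forall_norm_le_of_forall_summable row_bounded pointwise_bounded
  have diagonal : ∀ n, b n n = g (a n) := fun n => by
    rw [show b n n = _ from mul_right_comm _ _ _, one_sub_norm_sq_mul_besovKernel_self (ha1 n),
      one_mul]
  exact ⟨C, fun n => diagonal n ▸ hC n n⟩

lemma one_mem_Besov1 : (1 : ℂ → ℂ) ∈ Besov1 :=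
  mem_Besov1_iff.2 ⟨differentiableOn_const 1, by simp⟩

end Multipliers

/-- For `g` holomorphic on the unit disc, (i) `I_g` maps `B¹` into the Bloch
space iff `g ∈ H^∞`; (ii) `M_g` maps `B¹` into the Bloch space iff `g ∈ H^∞`. -/
theorem stmt0 (g : ℂ → ℂ) (hg : HolOn g) :
    (MapsInto (Ig g) Besov1 Bloch ↔ g ∈ Hinf) ∧
    (MapsInto (Mg g) Besov1 Bloch ↔ g ∈ Hinf) := by
  refine ⟨⟨fun h => mem_Hinf_of_forall_isBigO_mul_deriv hg fun f hf => ?_, fun h f hf => ?_⟩,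
    ⟨fun h => mem_Hinf_of_forall_isBigO_mul_deriv hg fun f hf => ?_, fun h f hf => ?_⟩⟩
  · have hIg := (mem_Bloch_iff_isBigO.1 (h f hf)).2
    exact hIg.congr' (eqOn_deriv_Ig hg hf.1).eventuallyEq .rfl
  · have hf' := (mem_Bloch_iff_isBigO.1 (Hinf_subset_Bloch (Besov1_subset_Hinf hf))).2
    have hgf' := (mem_Hinf_iff_isBigO.1 h).2.mul hf'
    exact mem_Bloch_iff_isBigO.2 ⟨holOn_Ig hg hf.1,
      hgf'.congr' (eqOn_deriv_Ig hg hf.1).symm.eventuallyEq (by simp)⟩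
  · have hg' : deriv g =O[𝓟 𝔻] fun z => (1 - ‖z‖ ^ 2)⁻¹ :=
      (mem_Bloch_iff_isBigO.1 (mul_one g ▸ h 1 one_mem_Besov1)).2
    have hg'f := (hg'.mul (mem_Hinf_iff_isBigO.1 (Besov1_subset_Hinf hf)).2).congr_right
      fun _ => mul_one _
    have hMg := (mem_Bloch_iff_isBigO.1 (h f hf)).2.congr' (eqOn_deriv_Mg hg hf.1).eventuallyEq .rfl
    exact (hMg.sub hg'f).congr_left fun _ => add_sub_cancel_left _ _
  · exact Hinf_subset_Bloch (Mg_mem_Hinf h (Besov1_subset_Hinf hf))
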